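/- arXiv:2406.19088 — 6 statements merged into one kernel-verified Lean document; each statement's English description precedes it below -/
import Mathlib

section
/- Let (Ω₁, μ₁), …, (Ω_k, μ_k) be σ-finite measure spaces, fix j ∈ {1, …, k}, and for each l let (f_n^{(l)})_{n∈ℕ} be a sequence in L²(Ω_l, μ_l) and f^{(l)} ∈ L²(Ω_l, μ_l) with f^{(l)} ≠ 0. Assume: (i) the product functions F_n(x₁,…,x_k) := ∏_{l=1}^k f_n^{(l)}(x_l) converge weakly in L²(μ₁ ⊗ ⋯ ⊗ μ_k) to F(x₁,…,x_k) := ∏_{l=1}^k f^{(l)}(x_l), i.e. ⟨F_n, G⟩ → ⟨F, G⟩ for every G ∈ L²(μ₁ ⊗ ⋯ ⊗ μ_k); and (ii) for every l ≠ j, f_n^{(l)} → f^{(l)} in L²(μ_l)-norm. Then f_n^{(j)} converges weakly to f^{(j)} in L²(Ω_j, μ_j), i.e. ⟨f_n^{(j)}, g⟩ → ⟨f^{(j)}, g⟩ for every g ∈ L²(Ω_j, μ_j). -/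
open MeasureTheory Filter

theorem aux_memLp {k : ℕ} {Ω : Fin k → Type*} [∀ l, MeasurableSpace (Ω l)]
    (μ : ∀ l, Measure (Ω l)) [∀ l, SigmaFinite (μ l)] (h : ∀ l, Lp ℝ 2 (μ l)) :
    MemLp (fun x : ∀ l, Ω l => ∏ l, h l (x l)) 2 (Measure.pi μ) := by
  have hm : AEStronglyMeasurable (fun x : ∀ l, Ω l => ∏ l, h l (x l)) (Measure.pi μ) := by
    apply Finset.aestronglyMeasurable_fun_prod
    intro l _
    exact (Lp.aestronglyMeasurable (h l)).comp_quasiMeasurePreserving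
      (Measure.quasiMeasurePreserving_eval μ l)
  rw [memLp_two_iff_integrable_sq hm]
  simp_rw [← Finset.prod_pow]
  exact Integrable.fintype_prod_dep (f := fun l y => (h l y) ^ 2)
    (fun l => (memLp_two_iff_integrable_sq (Lp.aestronglyMeasurable (h l))).1 (Lp.memLp (h l)))

theorem aux_integral {k : ℕ} {Ω : Fin k → Type*} [∀ l, MeasurableSpace (Ω l)]
    (μ : ∀ l, Measure (Ω l)) [∀ l, SigmaFinite (μ l)] (u h : ∀ l, Lp ℝ 2 (μ l)) :
    ∫ x, (∏ l, u l (x l)) * ((aux_memLp μ h).toLp _ : (∀ l, Ω l) → ℝ) x ∂(Measure.pi μ)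
      = ∏ l, inner (𝕜 := ℝ) (u l) (h l) := by
  have e : ∫ x, (∏ l, u l (x l)) * ((aux_memLp μ h).toLp _ : (∀ l, Ω l) → ℝ) x ∂(Measure.pi μ)
      = ∫ x, ∏ l, (u l (x l) * h l (x l)) ∂(Measure.pi μ) := by
    apply integral_congr_ae
    filter_upwards [(aux_memLp μ h).coeFn_toLp] with x hx
    rw [hx, Finset.prod_mul_distrib]
  rw [e, integral_fintype_prod_eq_prod (fun l y => u l y * h l y)]
  refine Finset.prod_congr rfl fun l _ => ?_
  rw [L2.inner_def]
  simp [mul_comm]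

/-- **Weak convergence of a tensor factor from weak convergence of product functions.**
Let `μ₁, …, μ_k` be σ-finite, fix `j`, and let `fₙ⁽ˡ⁾, f⁽ˡ⁾ ∈ L²(μ_l)` with each `f⁽ˡ⁾ ≠ 0`.
If the product functions `Fₙ(x) = ∏ₗ fₙ⁽ˡ⁾(xₗ)` converge weakly in `L²(μ₁ ⊗ ⋯ ⊗ μ_k)` to
`F(x) = ∏ₗ f⁽ˡ⁾(xₗ)` (i.e. integrals against every `G ∈ L²` converge), and for every
`l ≠ j` we have `fₙ⁽ˡ⁾ → f⁽ˡ⁾` in `L²`-norm, then `fₙ⁽ʲ⁾ → f⁽ʲ⁾` weakly in `L²(μ_j)`. -/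
theorem weak_convergence_of_factor
    {k : ℕ} {Ω : Fin k → Type*} [∀ l, MeasurableSpace (Ω l)]
    (μ : ∀ l, Measure (Ω l)) [∀ l, SigmaFinite (μ l)]
    (j : Fin k)
    (f : ℕ → ∀ l, Lp ℝ 2 (μ l)) (flim : ∀ l, Lp ℝ 2 (μ l))
    (hne : ∀ l, flim l ≠ 0)
    (hweak : ∀ G : Lp ℝ 2 (Measure.pi μ),
      Tendsto (fun n => ∫ x, (∏ l, f n l (x l)) * G x ∂(Measure.pi μ)) atTop
        (nhds (∫ x, (∏ l, flim l (x l)) * G x ∂(Measure.pi μ))))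
    (hstrong : ∀ l, l ≠ j → Tendsto (fun n => ‖f n l - flim l‖) atTop (nhds 0)) :
    ∀ g : Lp ℝ 2 (μ j),
      Tendsto (fun n => inner (𝕜 := ℝ) (f n j) g) atTop
        (nhds (inner (𝕜 := ℝ) (flim j) g)) := by
  intro g
  have hw := hweak ((aux_memLp μ (Function.update flim j g)).toLp _)
  simp only [aux_integral] at hw
  have key : ∀ u : ∀ l, Lp ℝ 2 (μ l),
      ∏ l, inner (𝕜 := ℝ) (u l) (Function.update flim j g l)
      = inner (𝕜 := ℝ) (u j) g * ∏ l ∈ Finset.univ.erase j, inner (𝕜 := ℝ) (u l) (flim l) := by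
    intro u
    rw [← Finset.mul_prod_erase _ _ (Finset.mem_univ j)]
    congr 1
    · simp
    · refine Finset.prod_congr rfl fun l hl => ?_
      rw [Function.update_of_ne (Finset.ne_of_mem_erase hl)]
  simp only [key] at hw
  have hP : Tendsto (fun n => ∏ l ∈ Finset.univ.erase j, inner (𝕜 := ℝ) (f n l) (flim l)) atTop
      (nhds (∏ l ∈ Finset.univ.erase j, inner (𝕜 := ℝ) (flim l) (flim l))) := by
    refine tendsto_finsetProd _ fun l hl => ?_
    exact (tendsto_iff_norm_sub_tendsto_zero.2
      (hstrong l (Finset.ne_of_mem_erase hl))).inner tendsto_const_nhds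
  have hP0 : ∏ l ∈ Finset.univ.erase j, inner (𝕜 := ℝ) (flim l) (flim l) ≠ 0 :=
    Finset.prod_ne_zero_iff.2 fun l _ => inner_self_ne_zero.2 (hne l)
  have hd := hw.div hP hP0
  rw [mul_div_cancel_right₀ _ hP0] at hd
  refine hd.congr' ?_
  filter_upwards [hP.eventually_ne hP0] with n hn
  exact mul_div_cancel_right₀ _ hn
end

section
/- Let α > 0 be real, k ∈ ℕ, x ∈ ℤ^k, i ∈ {1, …, k}, and r ∈ ℤ with r ≠ 0. Then the detailed balance relation ν(x) · (α + #{ j ≠ i : x_j = x_i + r }) = ν(x^{i,r}) · (α + #{ j ≠ i : x_j = x_i }) holds. -/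
open Finset

/-- The number of particles of the configuration `x ∈ ℤ^k` at site `j ∈ ℤ`. -/
def numAt {k : ℕ} (x : Fin k → ℤ) (j : ℤ) : ℕ :=
  (Finset.univ.filter fun i => x i = j).card

/-- The reversible measure `ν(x) = ∏_{j ∈ ℤ} Γ(α + ℓ_x(j)) / Γ(α)` of `k` SIP(α) particles;
only finitely many factors differ from `1`. -/
noncomputable def nuSIP (α : ℝ) {k : ℕ} (x : Fin k → ℤ) : ℝ :=
  ∏ᶠ j : ℤ, Real.Gamma (α + numAt x j) / Real.Gamma α

theorem nuSIP_factor (α : ℝ) (hα : 0 < α) {k : ℕ} (y : Fin k → ℤ) (i : Fin k) :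
    nuSIP α y = (∏ᶠ j : ℤ, Real.Gamma (α +
        ((Finset.univ.filter fun l => l ≠ i ∧ y l = j).card : ℝ)) / Real.Gamma α) *
      (α + ((Finset.univ.filter fun l => l ≠ i ∧ y l = y i).card : ℝ)) := by
  have hΓ : Real.Gamma α ≠ 0 := (Real.Gamma_pos_of_pos hα).ne'
  have hfac : ∀ j : ℤ, Real.Gamma (α + numAt y j) / Real.Gamma α =
      (Real.Gamma (α + ((Finset.univ.filter fun l => l ≠ i ∧ y l = j).card : ℝ)) /
        Real.Gamma α) *
      (if j = y i then (α + ((Finset.univ.filter fun l => l ≠ i ∧ y l = y i).card : ℝ))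
        else 1) := by
    intro j
    by_cases hj : j = y i
    · subst hj
      have h1 : numAt y (y i) = (Finset.univ.filter fun l => l ≠ i ∧ y l = y i).card + 1 := by
        unfold numAt
        rw [← Finset.card_insert_of_notMem (a := i) (by simp)]
        congr 1
        ext l
        by_cases hl : l = i <;> simp [hl]
      have hpos : α + ((Finset.univ.filter fun l => l ≠ i ∧ y l = y i).card : ℝ) ≠ 0 := by
        positivity
      rw [h1, if_pos rfl]
      push_cast
      rw [← add_assoc, Real.Gamma_add_one hpos]
      ring
    · have h1 : numAt y j = (Finset.univ.filter fun l => l ≠ i ∧ y l = j).card := by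
        unfold numAt
        congr 1
        ext l
        by_cases hl : l = i
        · subst hl
          simp [Ne.symm hj]
        · simp [hl]
      rw [h1, if_neg hj, mul_one]
  unfold nuSIP
  rw [finprod_congr hfac, finprod_mul_distrib]
  · congr 1
    rw [finprod_eq_single _ (y i) (fun j hj => if_neg hj), if_pos rfl]
  · apply (Set.finite_range y).subset
    intro j hj
    by_contra hn
    apply hj
    have : (Finset.univ.filter fun l => l ≠ i ∧ y l = j) = ∅ := by
      ext l
      simp only [Finset.mem_filter, Finset.mem_univ, true_and, Finset.notMem_empty, iff_false]
      rintro ⟨_, h⟩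
      exact hn ⟨l, h⟩
    simp [this, hΓ]
  · apply (Set.finite_singleton (y i)).subset
    intro j hj
    by_contra hn
    exact hj (if_neg hn)

/-- **Detailed balance for the `k`-particle SIP(α).** For `α > 0`, `x ∈ ℤ^k`, `i` and `r ≠ 0`,
`ν(x) (α + #{j ≠ i : x_j = x_i + r}) = ν(x^{i,r}) (α + #{j ≠ i : x_j = x_i})`. -/
theorem sip_detailed_balance (α : ℝ) (hα : 0 < α) (k : ℕ) (x : Fin k → ℤ)
    (i : Fin k) (r : ℤ) (hr : r ≠ 0) :
    nuSIP α x * (α + ((Finset.univ.filter fun j => j ≠ i ∧ x j = x i + r).card : ℝ))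
      = nuSIP α (Function.update x i (x i + r)) *
        (α + ((Finset.univ.filter fun j => j ≠ i ∧ x j = x i).card : ℝ)) := by
  have hm : ∀ j : ℤ, (Finset.univ.filter fun l => l ≠ i ∧
      Function.update x i (x i + r) l = j) = (Finset.univ.filter fun l => l ≠ i ∧ x l = j) := by
    intro j
    ext l
    by_cases hl : l = i <;> simp [hl]
  rw [nuSIP_factor α hα x i, nuSIP_factor α hα (Function.update x i (x i + r)) i]
  simp only [hm, Function.update_self]
  ring
end

section
/- Let α > 0 be real and k ∈ ℕ. For f : ℤ^k → ℝ define (Lf)(x) := Σ_{i=1}^k Σ_{σ ∈ {−1,1}} (α + #{ j ≠ i : x_j = x_i + σ }) · ( f(x^{i,σ}) − f(x) ). Then for all finitely supported functions f, g : ℤ^k → ℝ, the generator L is symmetric in L²(ℤ^k, ν): Σ_{x ∈ ℤ^k} ν(x) g(x) (Lf)(x) = Σ_{x ∈ ℤ^k} ν(x) f(x) (Lg)(x) (both sums have only finitely many nonzero terms). -/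
open Finset

/-- The (unscaled) generator of `k` interacting SIP(α) particles in coordinate notation:
`(Lf)(x) = Σᵢ Σ_{σ = ±1} (α + #{j ≠ i : x_j = x_i + σ}) (f(x^{i,σ}) − f(x))`. -/
noncomputable def sipGen (α : ℝ) {k : ℕ} (f : (Fin k → ℤ) → ℝ) (x : Fin k → ℤ) : ℝ :=
  ∑ i : Fin k, ∑ σ ∈ ({-1, 1} : Finset ℤ),
    (α + ((Finset.univ.filter fun j => j ≠ i ∧ x j = x i + σ).card : ℝ)) *
      (f (Function.update x i (x i + σ)) - f x)

/-- rate -/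
def mAt {k : ℕ} (x : Fin k → ℤ) (i : Fin k) (s : ℤ) : ℕ :=
  (Finset.univ.filter fun j => j ≠ i ∧ x j = s).card

lemma mAt_update {k : ℕ} (x : Fin k → ℤ) (i : Fin k) (s t : ℤ) :
    mAt (Function.update x i t) i s = mAt x i s := by
  unfold mAt
  congr 1
  ext j
  simp only [Finset.mem_filter, Finset.mem_univ, true_and]
  constructor
  · rintro ⟨h, h'⟩
    rw [Function.update_of_ne h] at h'
    exact ⟨h, h'⟩
  · rintro ⟨h, h'⟩
    rw [Function.update_of_ne h]
    exact ⟨h, h'⟩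

lemma numAt_eq {k : ℕ} (x : Fin k → ℤ) (i : Fin k) (s : ℤ) :
    numAt x s = mAt x i s + if s = x i then 1 else 0 := by
  unfold numAt mAt
  split_ifs with h
  · subst h
    have : (Finset.univ.filter fun j => x j = x i)
        = insert i (Finset.univ.filter fun j => j ≠ i ∧ x j = x i) := by
      ext j
      by_cases hj : j = i <;> simp [hj]
    rw [this, Finset.card_insert_of_notMem (by simp)]
  · rw [add_zero]
    congr 1
    ext j
    by_cases hj : j = i
    · subst hj
      simp [Ne.symm h]
    · simp [hj]

lemma nu_eq (α : ℝ) (hα : 0 < α) {k : ℕ} (x : Fin k → ℤ) (i : Fin k) :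
    nuSIP α x = (α + mAt x i (x i)) * ∏ᶠ s : ℤ, Real.Gamma (α + mAt x i s) / Real.Gamma α := by
  have hG : Real.Gamma α ≠ 0 := (Real.Gamma_pos_of_pos hα).ne'
  have h1 : ∀ s, Real.Gamma (α + numAt x s) / Real.Gamma α
      = (if s = x i then (α + mAt x i (x i)) else 1) *
        (Real.Gamma (α + mAt x i s) / Real.Gamma α) := by
    intro s
    rw [numAt_eq x i s]
    split_ifs with h
    · subst h
      push_cast
      rw [← add_assoc, Real.Gamma_add_one (by positivity), mul_div_assoc]
    · simp
  unfold nuSIP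
  rw [finprod_congr h1, finprod_mul_distrib]
  · congr 1
    rw [finprod_eq_single _ (x i)]
    · simp
    · intro s hs
      simp [hs]
  · apply (Set.finite_singleton (x i)).subset
    intro s hs
    by_contra h
    apply hs
    have h' : s ≠ x i := h
    simp [h']
  · apply (Set.finite_range x).subset
    intro s hs
    by_contra h
    apply hs
    have : mAt x i s = 0 := by
      unfold mAt
      rw [Finset.card_eq_zero, Finset.filter_eq_empty_iff]
      rintro j - ⟨-, hj⟩
      exact h ⟨j, hj⟩
    simp [this, hG]

lemma balance (α : ℝ) (hα : 0 < α) {k : ℕ} (x : Fin k → ℤ) (i : Fin k) (t : ℤ) :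
    nuSIP α x * (α + mAt x i t)
      = nuSIP α (Function.update x i t) * (α + mAt (Function.update x i t) i (x i)) := by
  rw [nu_eq α hα x i, nu_eq α hα (Function.update x i t) i]
  simp only [mAt_update, Function.update_self]
  ring

/-- shift -/
def shiftE {k : ℕ} (i : Fin k) (σ : ℤ) : (Fin k → ℤ) ≃ (Fin k → ℤ) where
  toFun x := Function.update x i (x i + σ)
  invFun x := Function.update x i (x i - σ)
  left_inv x := by simp
  right_inv x := by simp

lemma swap (α : ℝ) (hα : 0 < α) {k : ℕ} (f g : (Fin k → ℤ) → ℝ) (i : Fin k) (σ : ℤ) :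
    ∑ᶠ x : Fin k → ℤ, nuSIP α x * g x * ((α + mAt x i (x i + σ)) *
        f (Function.update x i (x i + σ)))
    = ∑ᶠ x : Fin k → ℤ, nuSIP α x * f x * ((α + mAt x i (x i + -σ)) *
        g (Function.update x i (x i + -σ))) := by
  rw [← finsum_comp_equiv (shiftE i σ) (f := fun x => nuSIP α x * f x *
    ((α + mAt x i (x i + -σ)) * g (Function.update x i (x i + -σ))))]
  apply finsum_congr
  intro x
  have := balance α hα x i (x i + σ)
  simp only [shiftE, Equiv.coe_fn_mk, Function.update_self, Function.update_idem,
    add_neg_cancel_right, Function.update_eq_self]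
  linear_combination (g x * f (Function.update x i (x i + σ))) * this

lemma expand (α : ℝ) {k : ℕ} (f g : (Fin k → ℤ) → ℝ) (hg : (Function.support g).Finite) :
    ∑ᶠ x : Fin k → ℤ, nuSIP α x * g x * sipGen α f x
    = ∑ i : Fin k, ((∑ᶠ x : Fin k → ℤ, nuSIP α x * g x * ((α + mAt x i (x i + -1)) *
        f (Function.update x i (x i + -1))))
      + (∑ᶠ x : Fin k → ℤ, nuSIP α x * g x * ((α + mAt x i (x i + 1)) *
        f (Function.update x i (x i + 1))))
      - (∑ᶠ x : Fin k → ℤ, nuSIP α x * (g x * f x) * ((α + mAt x i (x i + -1)) +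
         (α + mAt x i (x i + 1))))) := by
  have fin : ∀ h : (Fin k → ℤ) → ℝ, (∀ x, g x = 0 → h x = 0) → (Function.support h).Finite := by
    intro h hh
    apply hg.subset
    intro x hx h0
    exact hx (hh x h0)
  symm
  calc _ = ∑ i : Fin k, ∑ᶠ x : Fin k → ℤ, (nuSIP α x * g x * ((α + mAt x i (x i + -1)) *
        f (Function.update x i (x i + -1)))
      + nuSIP α x * g x * ((α + mAt x i (x i + 1)) *
        f (Function.update x i (x i + 1)))
      - nuSIP α x * (g x * f x) * ((α + mAt x i (x i + -1)) +
         (α + mAt x i (x i + 1)))) := by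
        refine Finset.sum_congr rfl fun i _ => ?_
        rw [finsum_sub_distrib, finsum_add_distrib]
        all_goals
          apply fin
          intro x hx
          simp [hx]
    _ = _ := by
        rw [← finsum_sum_comm]
        · apply finsum_congr
          intro x
          unfold sipGen
          rw [Finset.mul_sum]
          refine Finset.sum_congr rfl fun i _ => ?_
          rw [Finset.sum_pair (by norm_num)]
          simp only [mAt]
          ring
        · intro i _
          apply fin
          intro x hx
          simp [hx]

theorem sip_generator_symmetric (α : ℝ) (hα : 0 < α) (k : ℕ)
    (f g : (Fin k → ℤ) → ℝ)
    (hf : (Function.support f).Finite) (hg : (Function.support g).Finite) :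
    ∑ᶠ x : Fin k → ℤ, nuSIP α x * g x * sipGen α f x
      = ∑ᶠ x : Fin k → ℤ, nuSIP α x * f x * sipGen α g x := by
  rw [expand α f g hg, expand α g f hf]
  refine Finset.sum_congr rfl fun i _ => ?_
  rw [swap α hα f g i (-1), swap α hα f g i 1, neg_neg]
  simp only [mul_comm (g _) (f _)]
  ring
end

section
/- Let α ≥ 1 be real and k ∈ ℕ. Then for every function f : ℤ^k → ℝ, the following inequality of sums valued in the extended nonnegative reals [0, ∞] holds: Σ_{x ∈ ℤ^k} Σ_{i=1}^k Σ_{σ ∈ {−1,1}} α · ( f(x^{i,σ}) − f(x) )² ≤ Σ_{x ∈ ℤ^k} Σ_{i=1}^k Σ_{σ ∈ {−1,1}} ν(x) · (α + #{ j ≠ i : x_j = x_i + σ }) · ( f(x^{i,σ}) − f(x) )², i.e. the Dirichlet form of k SIP(α) particles dominates the Dirichlet form of k independent random walkers. -/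
open Finset

theorem gamma_mono_aux (α : ℝ) (hα : 1 ≤ α) (n : ℕ) :
    Real.Gamma α ≤ Real.Gamma (α + n) := by
  induction n with
  | zero => simp
  | succ n ih =>
    have hn : (0 : ℝ) ≤ n := Nat.cast_nonneg n
    have h : Real.Gamma (α + (n + 1 : ℕ)) = (α + n) * Real.Gamma (α + n) := by
      rw [← Real.Gamma_add_one (by linarith)]
      push_cast
      ring_nf
    have hp : 0 < Real.Gamma (α + n) := Real.Gamma_pos_of_pos (by linarith)
    rw [h]
    nlinarith

theorem one_le_nuSIP (α : ℝ) (hα : 1 ≤ α) {k : ℕ} (x : Fin k → ℤ) : 1 ≤ nuSIP α x := by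
  unfold nuSIP
  refine finprod_induction (fun y : ℝ => 1 ≤ y) le_rfl
    (fun a b ha hb => one_le_mul_of_one_le_of_one_le ha hb) (fun j => ?_)
  rw [one_le_div (Real.Gamma_pos_of_pos (by linarith))]
  exact gamma_mono_aux α hα _

/-- **Dirichlet form domination.** For `α ≥ 1` and any `f : ℤ^k → ℝ`, the Dirichlet form of
`k` SIP(α) particles dominates the Dirichlet form of `k` independent random walkers, as an
inequality of sums valued in `[0, ∞]`:
`Σₓ Σᵢ Σ_{σ=±1} α (f(x^{i,σ}) − f(x))²
  ≤ Σₓ Σᵢ Σ_{σ=±1} ν(x) (α + #{j ≠ i : x_j = x_i + σ}) (f(x^{i,σ}) − f(x))²`. -/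
theorem sip_dirichlet_dominates_irw (α : ℝ) (hα : 1 ≤ α) (k : ℕ)
    (f : (Fin k → ℤ) → ℝ) :
    (∑' x : Fin k → ℤ, ∑ i : Fin k, ∑ σ ∈ ({-1, 1} : Finset ℤ),
        ENNReal.ofReal (α * (f (Function.update x i (x i + σ)) - f x) ^ 2))
      ≤ ∑' x : Fin k → ℤ, ∑ i : Fin k, ∑ σ ∈ ({-1, 1} : Finset ℤ),
        ENNReal.ofReal (nuSIP α x *
          (α + ((Finset.univ.filter fun j => j ≠ i ∧ x j = x i + σ).card : ℝ)) *
          (f (Function.update x i (x i + σ)) - f x) ^ 2) := by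
  refine ENNReal.tsum_le_tsum fun x => Finset.sum_le_sum fun i _ =>
    Finset.sum_le_sum fun σ _ => ENNReal.ofReal_le_ofReal ?_
  refine mul_le_mul_of_nonneg_right ?_ (sq_nonneg _)
  have h1 := one_le_nuSIP α hα x
  have h2 : (0 : ℝ) ≤ ((Finset.univ.filter fun j => j ≠ i ∧ x j = x i + σ).card : ℝ) :=
    Nat.cast_nonneg _
  nlinarith
end

section
/- Let k ≥ 1 and let f : ℝ^k → ℝ be smooth with compact support. Then lim_{n→∞} (n^{2}/(2 n^{k})) · Σ_{x ∈ ℤ^k} Σ_{i=1}^k Σ_{σ ∈ {−1,1}} ( f((x + σ e_i)/n) − f(x/n) )² = Σ_{i=1}^k ∫_{ℝ^k} (∂f/∂x_i)(z)² dz, where e_i ∈ ℤ^k is the i-th standard basis vector, x/n denotes the point (x₁/n, …, x_k/n) ∈ ℝ^k, and the integral is with respect to Lebesgue measure on ℝ^k. -/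
open Filter MeasureTheory

namespace IRWAux

open scoped Pointwise

/-- The lattice cube of indices with `|x_l| ≤ M n`. -/
noncomputable def cube (k M n : ℕ) : Finset (Fin k → ℤ) :=
  Fintype.piFinset (fun _ => Finset.Icc (-((M * n : ℕ) : ℤ)) ((M * n : ℕ) : ℤ))

lemma mem_cube {k M n : ℕ} (hn : 1 ≤ n) (x : Fin k → ℤ) :
    x ∈ cube k M n ↔ (fun l => (x l : ℝ) / n) ∈ Metric.closedBall (0 : Fin k → ℝ) M := by
  have hn' : (0 : ℝ) < n := by exact_mod_cast hn
  rw [mem_closedBall_zero_iff, pi_norm_le_iff_of_nonneg (by positivity)]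
  simp only [cube, Fintype.mem_piFinset, Finset.mem_Icc]
  refine forall_congr' fun l => ?_
  rw [Real.norm_eq_abs, abs_div, abs_of_pos hn', div_le_iff₀ hn', ← abs_le]
  rw [← Int.cast_abs]
  constructor
  · intro h
    have : ((|x l| : ℤ) : ℝ) ≤ (((M * n : ℕ) : ℤ) : ℝ) := by exact_mod_cast h
    simpa using this
  · intro h
    have : ((|x l| : ℤ) : ℝ) ≤ (((M * n : ℕ) : ℤ) : ℝ) := by simpa using h
    exact_mod_cast this

lemma riemann (k M : ℕ) (F : (Fin k → ℝ) → ℝ) (hF : Continuous F) :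
    Tendsto (fun n : ℕ => (∑ x ∈ cube k M n, F (fun l => (x l : ℝ) / n)) / (n : ℝ) ^ k)
      atTop (nhds (∫ x in Metric.closedBall (0 : Fin k → ℝ) M, F x)) := by
  have h := tendsto_tsum_div_pow_atTop_integral (Metric.closedBall (0 : Fin k → ℝ) M) F hF
    Metric.isBounded_closedBall Metric.isClosed_closedBall.measurableSet
    ((convex_closedBall _ _).addHaar_frontier _)
  refine h.congr' ?_
  filter_upwards [eventually_ge_atTop 1] with n hn
  have hn' : (n : ℝ) ≠ 0 := by exact_mod_cast (by omega : n ≠ 0)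
  rw [Fintype.card_fin]
  congr 1
  rw [tsum_subtype]
  set L : Set (Fin k → ℝ) :=
    (n : ℝ)⁻¹ • (Submodule.span ℤ (Set.range (Pi.basisFun ℝ (Fin k))) : Set (Fin k → ℝ)) with hL
  have hmem : ∀ y, y ∈ L ↔ ∃ x : Fin k → ℤ, (fun l => (x l : ℝ) / n) = y := by
    intro y
    rw [hL, Set.mem_smul_set]
    constructor
    · rintro ⟨z, hz, rfl⟩
      rw [SetLike.mem_coe, Module.Basis.mem_span_iff_repr_mem] at hz
      choose x hx using hz
      refine ⟨x, ?_⟩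
      ext l
      have := hx l
      simp at this
      simp [this, div_eq_inv_mul]
    · rintro ⟨x, rfl⟩
      refine ⟨fun l => (x l : ℝ), ?_, ?_⟩
      · rw [SetLike.mem_coe, Module.Basis.mem_span_iff_repr_mem]
        intro l
        exact ⟨x l, by simp⟩
      · ext l
        simp [div_eq_inv_mul]
  have hinj : Function.Injective (fun (x : Fin k → ℤ) (l : Fin k) => (x l : ℝ) / n) := by
    intro x y hxy
    ext l
    have := congrFun hxy l
    simp only at this
    field_simp at this
    exact_mod_cast this
  rw [← hinj.tsum_eq (f := Set.indicator (Metric.closedBall (0 : Fin k → ℝ) M ∩ L) F)]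
  · rw [tsum_eq_sum (s := cube k M n)]
    · refine Finset.sum_congr rfl fun x hx => ?_
      rw [Set.indicator_of_mem]
      exact ⟨(mem_cube hn x).1 hx, (hmem _).2 ⟨x, rfl⟩⟩
    · intro x hx
      rw [Set.indicator_of_notMem]
      exact fun h => hx ((mem_cube hn x).2 h.1)
  · intro y hy
    have := Set.support_indicator_subset hy
    exact (hmem y).1 this.2

end IRWAux

open IRWAux in
theorem irw_dirichlet_tendsto_bm (k : ℕ) (hk : 1 ≤ k) (f : (Fin k → ℝ) → ℝ)
    (hsmooth : ContDiff ℝ (⊤ : ℕ∞) f) (hsupp : HasCompactSupport f) :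
    Tendsto (fun n : ℕ =>
        ((n : ℝ) ^ 2 / (2 * (n : ℝ) ^ k)) *
          ∑ᶠ x : Fin k → ℤ, ∑ i : Fin k, ∑ σ ∈ ({-1, 1} : Finset ℤ),
            (f (fun l => ((Function.update x i (x i + σ) l : ℤ) : ℝ) / n)
              - f (fun l => ((x l : ℤ) : ℝ) / n)) ^ 2)
      atTop
      (nhds (∑ i : Fin k, ∫ z : Fin k → ℝ, (fderiv ℝ f z (Pi.single i 1)) ^ 2)) := by
  set g : Fin k → (Fin k → ℝ) → ℝ := fun i z => (fderiv ℝ f z (Pi.single i 1)) ^ 2 with hg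
  have hdiff : Differentiable ℝ f := hsmooth.differentiable (by simp)
  have hgc : ∀ i, Continuous (g i) := fun i =>
    ((hsmooth.continuous_fderiv (by simp)).clm_apply continuous_const).pow 2
  have hgs : ∀ i, Function.support (g i) ⊆ tsupport f := by
    intro i z hz
    refine support_fderiv_subset ℝ (f := f) ?_
    intro h0
    apply hz
    simp [hg, h0]
  have hgcs : ∀ i, HasCompactSupport (g i) := fun i =>
    HasCompactSupport.of_support_subset_isCompact hsupp (hgs i)
  have hgu : ∀ i, UniformContinuous (g i) := fun i =>
    (hgcs i).uniformContinuous_of_continuous (hgc i)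
  obtain ⟨R, hR⟩ := hsupp.isCompact.isBounded.subset_closedBall 0
  obtain ⟨M, hM⟩ := exists_nat_ge (R + 1)
  -- the displacement
  have hdisp : ∀ (n : ℕ) (x : Fin k → ℤ) (i : Fin k) (σ : ℤ),
      (fun l => ((Function.update x i (x i + σ) l : ℤ) : ℝ) / n) - (fun l => (x l : ℝ) / n)
        = ((σ : ℝ) / n) • (Pi.single i (1 : ℝ) : Fin k → ℝ) := by
    intro n x i σ
    ext l
    by_cases hl : l = i
    · subst hl
      simp
      ring
    · simp [hl]
  have hdispn : ∀ (n : ℕ) (x : Fin k → ℤ) (i : Fin k) (σ : ℤ), σ ∈ ({-1, 1} : Finset ℤ) →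
      ‖(fun l => ((Function.update x i (x i + σ) l : ℤ) : ℝ) / n) - (fun l => (x l : ℝ) / n)‖
        = 1 / n := by
    intro n x i σ hσ
    rw [hdisp, norm_smul, Pi.norm_single]
    simp only [Finset.mem_insert, Finset.mem_singleton] at hσ
    rcases hσ with rfl | rfl <;> simp
  -- mean value
  have hmv : ∀ (n : ℕ) (x : Fin k → ℤ) (i : Fin k) (σ : ℤ), 1 ≤ n → σ ∈ ({-1, 1} : Finset ℤ) →
      ∃ z : Fin k → ℝ, dist z (fun l => (x l : ℝ) / n) ≤ 1 / n ∧
        (n : ℝ) ^ 2 * (f (fun l => ((Function.update x i (x i + σ) l : ℤ) : ℝ) / n)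
              - f (fun l => ((x l : ℤ) : ℝ) / n)) ^ 2 = g i z := by
    intro n x i σ hn hσ
    have hn' : (n : ℝ) ≠ 0 := by exact_mod_cast (by omega : n ≠ 0)
    obtain ⟨z, hz, h⟩ := domain_mvt (f := f) (s := Set.univ) (f' := fderiv ℝ f)
      (x := fun l => (x l : ℝ) / n)
      (y := fun l => ((Function.update x i (x i + σ) l : ℤ) : ℝ) / n)
      (fun x _ => (hdiff x).hasFDerivAt.hasFDerivWithinAt) convex_univ trivial trivial
    refine ⟨z, ?_, ?_⟩
    · have hb : segment ℝ (fun l => (x l : ℝ) / n)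
          (fun l => ((Function.update x i (x i + σ) l : ℤ) : ℝ) / n)
          ⊆ Metric.closedBall (fun l => (x l : ℝ) / n) (1 / n) := by
        apply (convex_closedBall _ _).segment_subset
        · exact Metric.mem_closedBall_self (by positivity)
        · rw [Metric.mem_closedBall, dist_eq_norm, hdispn n x i σ hσ]
      exact hb hz
    · rw [h, hdisp, map_smul, smul_eq_mul, hg]
      simp only [Finset.mem_insert, Finset.mem_singleton] at hσ
      rcases hσ with rfl | rfl <;> field_simp <;> simp
  set T : ℕ → (Fin k → ℤ) → ℝ := fun n x => ∑ i : Fin k, ∑ σ ∈ ({-1, 1} : Finset ℤ),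
            (f (fun l => ((Function.update x i (x i + σ) l : ℤ) : ℝ) / n)
              - f (fun l => ((x l : ℤ) : ℝ) / n)) ^ 2 with hT
  set F : (Fin k → ℝ) → ℝ := fun z => ∑ i, g i z with hF
  have hFc : Continuous F := continuous_finsetSum _ fun i _ => hgc i
  -- support
  have hTs : ∀ n : ℕ, 1 ≤ n → Function.support (T n) ⊆ (cube k M n : Set (Fin k → ℤ)) := by
    intro n hn x hx
    by_contra hxc
    apply hx
    have hn1 : (1 : ℝ) / n ≤ 1 := by
      rw [div_le_one (by exact_mod_cast hn)]
      exact_mod_cast hn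
    rw [Finset.mem_coe, mem_cube hn, mem_closedBall_zero_iff, not_le] at hxc
    have hf0 : ∀ y : Fin k → ℝ, R < ‖y‖ → f y = 0 := by
      intro y hy
      apply image_eq_zero_of_notMem_tsupport
      intro h
      have := hR h
      rw [mem_closedBall_zero_iff] at this
      linarith
    refine Finset.sum_eq_zero fun i _ => Finset.sum_eq_zero fun σ hσ => ?_
    rw [hf0 (fun l => (x l : ℝ) / n) (by linarith), hf0, sub_zero, zero_pow two_ne_zero]
    have h1 := hdispn n x i σ hσ
    have h2 := norm_sub_norm_le (fun l => (x l : ℝ) / n)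
      (fun l => ((Function.update x i (x i + σ) l : ℤ) : ℝ) / n)
    rw [norm_sub_rev, h1] at h2
    linarith
  -- limit integral
  have hint : ∫ z in Metric.closedBall (0 : Fin k → ℝ) M, F z = ∑ i, ∫ z, g i z := by
    rw [setIntegral_eq_integral_of_forall_compl_eq_zero, hF, integral_finsetSum]
    · exact fun i _ => (hgc i).integrable_of_hasCompactSupport (hgcs i)
    · intro z hz
      refine Finset.sum_eq_zero fun i _ => ?_
      by_contra h0
      have := hR (hgs i h0)
      rw [mem_closedBall_zero_iff] at this hz
      linarith
  have hlim := riemann k M F hFc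
  rw [hint] at hlim
  have hcard := riemann k M (fun _ => 1) continuous_const
  set V := ∫ x in Metric.closedBall (0 : Fin k → ℝ) M, (1 : ℝ) with hV
  have hV0 : 0 ≤ V := integral_nonneg fun _ => zero_le_one
  -- difference
  have hdiff0 : Tendsto (fun n : ℕ => ((n : ℝ) ^ 2 / (2 * (n : ℝ) ^ k)) * (∑ᶠ x, T n x)
      - (∑ x ∈ cube k M n, F (fun l => (x l : ℝ) / n)) / (n : ℝ) ^ k) atTop (nhds 0) := by
    rw [Metric.tendsto_atTop']
    intro ε hε
    set δ := ε / ((k + 1) * (V + 1)) with hδ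
    have hδ0 : 0 < δ := by positivity
    have hu : ∀ i, ∃ r > 0, ∀ a b, dist a b < r → dist (g i a) (g i b) < δ := fun i => by
      obtain ⟨r, hr, h⟩ := Metric.uniformContinuous_iff.1 (hgu i) δ hδ0
      exact ⟨r, hr, fun a b => @h a b⟩
    choose r hr0 hr using hu
    have e1 : ∀ᶠ n : ℕ in atTop, ∀ i, (1 : ℝ) / n < r i := by
      rw [eventually_all]
      intro i
      exact (tendsto_one_div_atTop_nhds_zero_nat (𝕜 := ℝ)).eventually (gt_mem_nhds (hr0 i))
    have e2 : ∀ᶠ n : ℕ in atTop, (∑ x ∈ cube k M n, (1 : ℝ)) / (n : ℝ) ^ k < V + 1 :=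
      hcard.eventually (gt_mem_nhds (by linarith))
    obtain ⟨N, hN⟩ := eventually_atTop.1 (e1.and (e2.and (eventually_ge_atTop 1)))
    refine ⟨N, fun n hnN => ?_⟩
    obtain ⟨h1, h2, hn⟩ := hN n hnN.le
    have hn' : (0 : ℝ) < n := by exact_mod_cast hn
    have hpt : ∀ x, |(n : ℝ) ^ 2 / 2 * T n x - F (fun l => (x l : ℝ) / n)| ≤ k * δ := by
      intro x
      have : (n : ℝ) ^ 2 / 2 * T n x - F (fun l => (x l : ℝ) / n)
          = ∑ i, ∑ σ ∈ ({-1, 1} : Finset ℤ), (((n : ℝ) ^ 2 *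
            (f (fun l => ((Function.update x i (x i + σ) l : ℤ) : ℝ) / n)
              - f (fun l => ((x l : ℤ) : ℝ) / n)) ^ 2 - g i (fun l => (x l : ℝ) / n)) / 2) := by
        rw [hT, hF]
        simp only
        rw [Finset.mul_sum, ← Finset.sum_sub_distrib]
        refine Finset.sum_congr rfl fun i _ => ?_
        rw [Finset.sum_pair (by norm_num), Finset.sum_pair (by norm_num)]
        ring
      rw [this]
      calc _ ≤ ∑ i : Fin k, ∑ σ ∈ ({-1, 1} : Finset ℤ), δ / 2 := by
            refine (Finset.abs_sum_le_sum_abs _ _).trans (Finset.sum_le_sum fun i _ => ?_)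
            refine (Finset.abs_sum_le_sum_abs _ _).trans (Finset.sum_le_sum fun σ hσ => ?_)
            obtain ⟨z, hz, he⟩ := hmv n x i σ hn hσ
            rw [he, abs_div, abs_two]
            have := hr i _ _ (hz.trans_lt (h1 i))
            rw [Real.dist_eq] at this
            linarith
        _ = k * δ := by
            simp only [Finset.sum_pair (show (-1 : ℤ) ≠ 1 by norm_num), add_halves,
              Finset.sum_const, Finset.card_univ, Fintype.card_fin, nsmul_eq_mul]
    rw [finsum_eq_sum_of_support_subset _ (hTs n hn), dist_zero_right, Real.norm_eq_abs]
    have : (n : ℝ) ^ 2 / (2 * (n : ℝ) ^ k) * (∑ x ∈ cube k M n, T n x)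
        - (∑ x ∈ cube k M n, F (fun l => (x l : ℝ) / n)) / (n : ℝ) ^ k
        = (∑ x ∈ cube k M n, ((n : ℝ) ^ 2 / 2 * T n x - F (fun l => (x l : ℝ) / n)))
          / (n : ℝ) ^ k := by
      rw [Finset.sum_sub_distrib, ← Finset.mul_sum]
      field_simp
    rw [this, abs_div, abs_of_pos (pow_pos hn' k)]
    calc _ ≤ (∑ x ∈ cube k M n, k * δ) / (n : ℝ) ^ k := by
          gcongr
          exact (Finset.abs_sum_le_sum_abs _ _).trans (Finset.sum_le_sum fun x _ => hpt x)
      _ = k * δ * ((∑ x ∈ cube k M n, (1 : ℝ)) / (n : ℝ) ^ k) := by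
          simp
          ring
      _ ≤ k * δ * (V + 1) := by gcongr
      _ < (k + 1) * δ * (V + 1) := by
          gcongr
          linarith
      _ = ε := by
          rw [hδ]
          field_simp
  have := hdiff0.add hlim
  simp only [sub_add_cancel, zero_add] at this
  exact this
end

section
/- Let k ≥ 2 and let f : ℝ^k → ℝ be smooth with compact support. Let D_k := { x ∈ ℤ^k : ∃ i ≠ j with |x_i − x_j| ≤ 1 } be the set of lattice configurations in which two coordinates lie within distance 1 of each other. Then lim_{n→∞} n^{2−k} · Σ_{x ∈ D_k} Σ_{i=1}^k Σ_{σ ∈ {−1,1}} ( f((x + σ e_i)/n) − f(x/n) )² = 0, where e_i ∈ ℤ^k is the i-th standard basis vector and x/n = (x₁/n, …, x_k/n) ∈ ℝ^k. -/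
open Filter

lemma card_pair (k : ℕ) (M : ℕ) (i j : Fin k) (hij : i ≠ j) :
    ((Fintype.piFinset fun _ : Fin k => Finset.Icc (-(M:ℤ)) M).filter
      (fun x => |x i - x j| ≤ 1)).card ≤ 3 * (2 * M + 1) ^ (k - 1) := by
  classical
  have h : ((Finset.Icc (-1:ℤ) 1) ×ˢ
      (Fintype.piFinset fun _ : {l : Fin k // l ≠ j} => Finset.Icc (-(M:ℤ)) M)).card
      = 3 * (2 * M + 1) ^ (k - 1) := by
    rw [Finset.card_product, Fintype.card_piFinset, Finset.prod_const, Finset.card_univ,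
      Fintype.card_subtype_compl]
    simp only [Int.card_Icc, Fintype.card_fin, Fintype.card_subtype_eq]
    congr 2
    omega
  rw [← h]
  apply Finset.card_le_card_of_injOn (fun x => (x i - x j, fun l => x l.1))
  · intro x hx
    simp only [Finset.coe_filter, Fintype.mem_piFinset, Finset.mem_Icc, Set.mem_ofPred_eq] at hx
    simp only [Finset.mem_coe, Finset.mem_product, Fintype.mem_piFinset, Finset.mem_Icc]
    exact ⟨abs_le.1 hx.2, fun l => hx.1 l.1⟩
  · intro x _ y _ hxy
    simp only [Prod.mk.injEq] at hxy
    obtain ⟨h1, h2⟩ := hxy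
    have h3 : ∀ l, l ≠ j → x l = y l := fun l hl => congrFun h2 ⟨l, hl⟩
    funext l
    by_cases hl : l = j
    · subst hl
      have := h3 i hij
      omega
    · exact h3 l hl

lemma card_all (k : ℕ) (M : ℕ) :
    ((Fintype.piFinset fun _ : Fin k => Finset.Icc (-(M:ℤ)) M).filter
      (fun x => ∃ i j, i ≠ j ∧ |x i - x j| ≤ 1)).card ≤ k * k * (3 * (2 * M + 1) ^ (k - 1)) := by
  classical
  have hsub : ((Fintype.piFinset fun _ : Fin k => Finset.Icc (-(M:ℤ)) M).filter
      (fun x => ∃ i j, i ≠ j ∧ |x i - x j| ≤ 1)) ⊆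
      ((Finset.univ : Finset (Fin k × Fin k)).filter (fun p => p.1 ≠ p.2)).biUnion (fun p =>
      (Fintype.piFinset fun _ : Fin k => Finset.Icc (-(M:ℤ)) M).filter
      (fun x => |x p.1 - x p.2| ≤ 1)) := by
    intro x hx
    rw [Finset.mem_filter] at hx
    obtain ⟨h1, i, j, hij, h2⟩ := hx
    rw [Finset.mem_biUnion]
    exact ⟨(i, j), by simpa using hij, Finset.mem_filter.2 ⟨h1, h2⟩⟩
  refine (Finset.card_le_card hsub).trans ((Finset.card_biUnion_le_card_mul _ _
    (3 * (2 * M + 1) ^ (k - 1)) ?_).trans ?_)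
  · intro p hp
    exact card_pair k M p.1 p.2 (Finset.mem_filter.1 hp).2
  · gcongr
    refine (Finset.card_filter_le _ _).trans ?_
    simp

theorem near_diagonal_contribution_vanishes (k : ℕ) (hk : 2 ≤ k) (f : (Fin k → ℝ) → ℝ)
    (hsmooth : ContDiff ℝ (⊤ : ℕ∞) f) (hsupp : HasCompactSupport f) :
    Tendsto (fun n : ℕ =>
        (n : ℝ) ^ ((2 : ℤ) - (k : ℤ)) *
          ∑ᶠ x ∈ {x : Fin k → ℤ | ∃ i j, i ≠ j ∧ |x i - x j| ≤ 1},
            ∑ i : Fin k, ∑ σ ∈ ({-1, 1} : Finset ℤ),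
              (f (fun l => ((Function.update x i (x i + σ) l : ℤ) : ℝ) / n)
                - f (fun l => ((x l : ℤ) : ℝ) / n)) ^ 2)
      atTop (nhds 0) := by
  classical
  obtain ⟨C, hC⟩ := (hsmooth.of_le (by exact_mod_cast le_top) :
    ContDiff ℝ 1 f).lipschitzWith_of_hasCompactSupport hsupp (by norm_num)
  obtain ⟨R0, hR0⟩ := hsupp.isCompact.isBounded.subset_closedBall (0 : Fin k → ℝ)
  obtain ⟨R, hR⟩ := exists_nat_ge R0
  have hf0 : ∀ y : Fin k → ℝ, f y ≠ 0 → ∀ l, |y l| ≤ R := by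
    intro y hy l
    have h1 := hR0 (subset_tsupport f hy)
    rw [mem_closedBall_zero_iff] at h1
    exact (norm_le_pi_norm y l).trans (h1.trans hR)
  set F : ℕ → (Fin k → ℤ) → ℝ := fun n x => ∑ i : Fin k, ∑ σ ∈ ({-1, 1} : Finset ℤ),
              (f (fun l => ((Function.update x i (x i + σ) l : ℤ) : ℝ) / n)
                - f (fun l => ((x l : ℤ) : ℝ) / n)) ^ 2 with hF
  have hF0 : ∀ n x, 0 ≤ F n x := fun n x =>
    Finset.sum_nonneg fun _ _ => Finset.sum_nonneg fun _ _ => sq_nonneg _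
  have hupd : ∀ (x : Fin k → ℤ) (i : Fin k) (σ : ℤ), σ ∈ ({-1, 1} : Finset ℤ) → ∀ l,
      |Function.update x i (x i + σ) l - x l| ≤ 1 := by
    intro x i σ hσ l
    by_cases hl : l = i
    · subst hl
      simp only [Function.update_self, add_sub_cancel_left]
      simp only [Finset.mem_insert, Finset.mem_singleton] at hσ
      rcases hσ with rfl | rfl <;> simp
    · simp [Function.update_of_ne hl]
  have hFle : ∀ n : ℕ, 1 ≤ n → ∀ x, F n x ≤ k * (2 * ((C:ℝ) * (1 / n)) ^ 2) := by
    intro n hn x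
    have hn' : (0:ℝ) < n := by exact_mod_cast hn
    have : ∀ i ∈ (Finset.univ : Finset (Fin k)), ∑ σ ∈ ({-1, 1} : Finset ℤ),
              (f (fun l => ((Function.update x i (x i + σ) l : ℤ) : ℝ) / n)
                - f (fun l => ((x l : ℤ) : ℝ) / n)) ^ 2 ≤ 2 * ((C:ℝ) * (1 / n)) ^ 2 := by
      intro i _
      refine (Finset.sum_le_card_nsmul _ _ (((C:ℝ) * (1 / n)) ^ 2) ?_).trans (le_of_eq (by simp))
      intro σ hσ
      rw [← sq_abs]
      gcongr
      rw [← Real.dist_eq]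
      refine (hC.dist_le_mul _ _).trans ?_
      gcongr
      rw [dist_pi_le_iff (by positivity)]
      intro l
      rw [Real.dist_eq, ← sub_div, abs_div, abs_of_pos hn']
      gcongr
      exact_mod_cast hupd x i σ hσ l
    refine (Finset.sum_le_card_nsmul _ _ _ this).trans (le_of_eq (by simp))
  have hFs : ∀ n : ℕ, 1 ≤ n → ∀ x, F n x ≠ 0 → ∀ l, |x l| ≤ ((R * n + 1 : ℕ) : ℤ) := by
    intro n hn x hx l
    have hn' : (0:ℝ) < n := by exact_mod_cast hn
    have key : ∀ z : Fin k → ℤ, f (fun l => ((z l : ℤ) : ℝ) / n) ≠ 0 → |z l| ≤ ((R * n : ℕ) : ℤ) := by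
      intro z hz
      have h := hf0 _ hz l
      rw [abs_div, abs_of_pos hn', div_le_iff₀ hn'] at h
      exact_mod_cast h
    obtain ⟨i, _, hi⟩ := Finset.exists_ne_zero_of_sum_ne_zero hx
    obtain ⟨σ, hσ, h⟩ := Finset.exists_ne_zero_of_sum_ne_zero hi
    by_cases h0 : f (fun l => ((x l : ℤ) : ℝ) / n) = 0
    · have h1 := key (Function.update x i (x i + σ)) (by
        intro h2
        apply h
        rw [h2, h0]; simp)
      have h2 := hupd x i σ hσ l
      rw [abs_le] at *
      push_cast at *
      constructor <;> linarith
    · have := key x h0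
      push_cast at *
      linarith
  have hsum : ∀ n : ℕ, 1 ≤ n → ∑ᶠ x ∈ {x : Fin k → ℤ | ∃ i j, i ≠ j ∧ |x i - x j| ≤ 1}, F n x
      = ∑ x ∈ ((Fintype.piFinset fun _ : Fin k =>
          Finset.Icc (-((R * n + 1 : ℕ):ℤ)) ((R * n + 1 : ℕ) : ℤ)).filter
      (fun x => ∃ i j, i ≠ j ∧ |x i - x j| ≤ 1)), F n x := by
    intro n hn
    apply finsum_mem_eq_sum_of_inter_support_eq
    ext x
    constructor
    · rintro ⟨h1, h2⟩
      refine ⟨?_, h2⟩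
      rw [Finset.mem_coe, Finset.mem_filter, Fintype.mem_piFinset]
      exact ⟨fun l => Finset.mem_Icc.2 (abs_le.1 (hFs n hn x h2 l)), h1⟩
    · rintro ⟨h1, h2⟩
      rw [Finset.mem_coe, Finset.mem_filter] at h1
      exact ⟨h1.2, h2⟩
  set K : ℝ := k * k * (3 * (2 * R + 3) ^ (k - 1)) * (k * (2 * (C:ℝ) ^ 2)) with hK
  have hlim : Tendsto (fun n : ℕ => K / (n:ℝ)) atTop (nhds 0) :=
    tendsto_const_div_atTop_nhds_zero_nat K
  refine tendsto_of_tendsto_of_tendsto_of_le_of_le' tendsto_const_nhds hlim ?_ ?_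
  · filter_upwards [eventually_ge_atTop 1] with n hn
    change 0 ≤ _ * ∑ᶠ x ∈ {x : Fin k → ℤ | ∃ i j, i ≠ j ∧ |x i - x j| ≤ 1}, F n x
    rw [hsum n hn]
    exact mul_nonneg (by positivity) (Finset.sum_nonneg fun x _ => hF0 n x)
  · filter_upwards [eventually_ge_atTop 1] with n hn
    change _ * ∑ᶠ x ∈ {x : Fin k → ℤ | ∃ i j, i ≠ j ∧ |x i - x j| ≤ 1}, F n x ≤ _
    rw [hsum n hn]
    have hn1 : (1:ℝ) ≤ n := by exact_mod_cast hn
    have hn' : (0:ℝ) < n := by linarith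
    have hS := Finset.sum_le_card_nsmul _ (F n) _ fun x (_ : x ∈ ((Fintype.piFinset fun _ : Fin k =>
          Finset.Icc (-((R * n + 1 : ℕ):ℤ)) ((R * n + 1 : ℕ) : ℤ)).filter
      (fun x => ∃ i j, i ≠ j ∧ |x i - x j| ≤ 1))) => hFle n hn x
    rw [nsmul_eq_mul] at hS
    have hcard : ((((Fintype.piFinset fun _ : Fin k =>
          Finset.Icc (-((R * n + 1 : ℕ):ℤ)) ((R * n + 1 : ℕ) : ℤ)).filter
      (fun x => ∃ i j, i ≠ j ∧ |x i - x j| ≤ 1)).card : ℕ) : ℝ) ≤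
        k * k * (3 * ((2 * R + 3) * n) ^ (k - 1)) := by
      have h1 : ((((Fintype.piFinset fun _ : Fin k =>
          Finset.Icc (-((R * n + 1 : ℕ):ℤ)) ((R * n + 1 : ℕ) : ℤ)).filter
      (fun x => ∃ i j, i ≠ j ∧ |x i - x j| ≤ 1)).card : ℕ) : ℝ) ≤
        ((k * k * (3 * (2 * (R * n + 1) + 1) ^ (k - 1)) : ℕ) : ℝ) := by
        exact_mod_cast card_all k (R * n + 1)
      refine h1.trans ?_
      push_cast
      gcongr
      nlinarith
    calc _ ≤ (n : ℝ) ^ ((2 : ℤ) - (k : ℤ)) * (k * k * (3 * ((2 * R + 3) * n) ^ (k - 1)) *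
          (k * (2 * ((C:ℝ) * (1 / n)) ^ 2))) := by
          gcongr
          exact hS.trans (by gcongr)
      _ = K / n := by
          obtain ⟨m, rfl⟩ : ∃ m, k = m + 1 := ⟨k - 1, by omega⟩
          have : (n:ℝ) ^ ((2 : ℤ) - ((m + 1 : ℕ) : ℤ)) = n / n ^ m := by
            rw [show (2 : ℤ) - ((m + 1 : ℕ) : ℤ) = 1 - (m : ℤ) by push_cast; ring,
              zpow_sub₀ hn'.ne', zpow_one, zpow_natCast]
          rw [this, hK, Nat.add_sub_cancel, mul_pow]
          field_simp
end
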